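/- arXiv:0902.0433 — 2 statements merged into one kernel-verified Lean document; each statement's English description precedes it below -/
import Mathlib

section
/- Let k ≥ 2, 0 ≤ j ≤ F_{k−1} − 1, and n = F_k + j (so that f(n) = F_{k+2} + j − 1). Let Aₙ be the set of factors of v₀ of length n that occur as subwords of the prefix (v₀(1), …, v₀(F_{k+1} − 2)). Then |Aₙ| = F_{k−1} − j − 1, every word of Aₙ occurs exactly twice as a subword of (v₀(1), …, v₀(f(n))), and each of the remaining F_{k−2} + 2j + 2 factors of v₀ of length n occurs exactly once as a subword of (v₀(1), …, v₀(f(n))). -/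
open scoped Classical

noncomputable section

/-- The Gauss map. -/
def gaussMap (x : ℝ) : ℝ := Int.fract x⁻¹

/-- `pq α k` is the partial quotient `a_{k+1}` of the continued fraction of `α`. -/
def pq (α : ℝ) (k : ℕ) : ℕ := ⌊(gaussMap^[k] α)⁻¹⌋₊

/-- `qd α (n+1)` is the convergent denominator `q_n`; `qd α 0 = q_{-1} = 0`, `qd α 1 = q₀ = 1`. -/
def qd (α : ℝ) : ℕ → ℕ
  | 0 => 0
  | 1 => 1
  | (n+2) => pq α n * qd α (n+1) + qd α n

/-- The circle map sequence of rotation number `α` (value `true` means letter `1`). -/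
def v0 (α : ℝ) (n : ℤ) : Bool := decide (1 - α ≤ Int.fract ((n : ℝ) * α))

/-- The word `(v₀(m+1), …, v₀(m+n))`. -/
def word (α : ℝ) (m n : ℕ) : List Bool :=
  (List.range n).map (fun i => v0 α ((m : ℤ) + 1 + i))

/-- `w` is a factor (admissible word) of `v₀`. -/
def IsFactor (α : ℝ) (w : List Bool) : Prop := ∃ m : ℕ, w = word α m w.length

/-- `w` occurs as a subword of the prefix `(v₀(1), …, v₀(N))`. -/
def OccursIn (α : ℝ) (w : List Bool) (N : ℕ) : Prop :=
  ∃ m : ℕ, m + w.length ≤ N ∧ w = word α m w.length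

/-- `exhaust α n` is `f(n)`: the least `N` such that every factor of length `n`
occurs in `(v₀(1), …, v₀(N))`. -/
def exhaust (α : ℝ) (n : ℕ) : ℕ :=
  sInf {N | ∀ w : List Bool, w.length = n → IsFactor α w → OccursIn α w N}

/-- number of occurrences of `w` in the prefix `(v₀(1), …, v₀(N))`. -/
def occCount (α : ℝ) (w : List Bool) (N : ℕ) : ℕ :=
  ((Finset.range N).filter (fun m => m + w.length ≤ N ∧ word α m w.length = w)).card

/-- the word `(v(m), v(m+1), …, v(m+n-1))` of a two-sided sequence. -/
def wordAt (v : ℤ → Bool) (m : ℤ) (n : ℕ) : List Bool :=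
  (List.range n).map (fun i => v (m + i))

/-- the hull `Ω`: closure of the set of translates of `v₀`. -/
def hull (α : ℝ) : Set (ℤ → Bool) :=
  closure {u | ∃ m : ℤ, u = fun n => v0 α (n - m)}


/-- Fibonacci numbers with `F 0 = 1`, `F 1 = 1`, `F 2 = 2`. -/
def F (n : ℕ) : ℕ := Nat.fib (n + 1)

/-!
Up to an additive constant, the window of length `n` at `m` is the list of the floors
`⌊(m + 1 + i)α⌋`, `i ≤ n`, and three facts about these floors give the theorem.

* The words of length `n` are determined by the integers `i ≤ n` for which `(m + 1)α` and `iα`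
  carry. These sets increase with the fractional part of `(m + 1)α`, so there are at most
  `n + 1` words.
* If `Nα` is closer to an integer `G` than `dα` is to any integer, then
  `⌊(N + d)α⌋ + ⌊(N - d)α⌋ = 2G - 1` is odd, so two windows `d` apart which both reach `N` differ.
  For `N = F_{k+1}` this makes the `n + 1` windows of length `n` starting at
  `F_{k+1} - 1 - n, …, F_{k+1} - 1` distinct; they therefore list every factor exactly once.
* No `pα` with `0 < p < F_{k+1}` is closer to an integer than `F_kα`, so adding
  `F_kα - F_{k-1}` to `pα` does not change its floor, and `v₀(p + F_k) = v₀(p)` for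
  `1 ≤ p ≤ F_{k+1} - 2`. Hence each of the earlier windows is repeated `F_k` places later, among
  the listed ones.
-/

open Set
open scoped goldenRatio

section Words

variable {α : ℝ} {m m' n : ℕ}

@[simp] lemma length_word : (word α m n).length = n := by simp [word]

lemma word_eq_word_iff :
    word α m n = word α m' n ↔ ∀ i < n, v0 α ((m : ℤ) + 1 + i) = v0 α ((m' : ℤ) + 1 + i) := by
  -- `word` maps over `List.range n` coerced to a list of integers, hence the monadic lemmas.
  simp only [word, List.map_inj_left, List.bind_eq_flatMap, List.pure_def, List.mem_flatMap,
    List.mem_range, List.mem_singleton, forall_exists_index, and_imp]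
  exact ⟨fun h i hi => h i i hi rfl, fun h _ i hi hcast => hcast ▸ h i hi⟩

lemma beattySeq_add_one (h0 : 0 ≤ α) (h1 : α ≤ 1) (p : ℤ) :
    beattySeq α (p + 1) = beattySeq α p + if v0 α p then 1 else 0 := by
  have hdecomp := Int.floor_add_fract ((p : ℝ) * α)
  have hnonneg := Int.fract_nonneg ((p : ℝ) * α)
  have hlt := Int.fract_lt_one ((p : ℝ) * α)
  simp only [beattySeq, v0, decide_eq_true_eq, Int.floor_eq_iff]
  split_ifs with h <;> push_cast <;> constructor <;> linarith

lemma v0_eq_v0_iff (h0 : 0 ≤ α) (h1 : α ≤ 1) (p p' : ℤ) :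
    v0 α p = v0 α p' ↔
      beattySeq α (p + 1) - beattySeq α p = beattySeq α (p' + 1) - beattySeq α p' := by
  rw [beattySeq_add_one h0 h1, beattySeq_add_one h0 h1, add_sub_cancel_left, add_sub_cancel_left]
  cases v0 α p <;> cases v0 α p' <;> simp

lemma word_eq_word_iff_beattySeq (h0 : 0 ≤ α) (h1 : α ≤ 1) :
    word α m n = word α m' n ↔
      ∃ c, ∀ i : ℕ, i ≤ n → beattySeq α (m' + 1 + i) = beattySeq α (m + 1 + i) + c := by
  simp only [word_eq_word_iff, v0_eq_v0_iff h0 h1]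
  constructor
  · intro h
    refine ⟨beattySeq α (m' + 1) - beattySeq α (m + 1), fun i hi => ?_⟩
    induction i with
    | zero => simp
    | succ i ih =>
      have hstep := h i hi
      have hi' := ih (by omega)
      push_cast
      rw [← add_assoc, ← add_assoc]
      linarith
  · rintro ⟨c, hc⟩ i hi
    have hleft := hc i hi.le
    have hright := hc (i + 1) hi
    push_cast at hright
    rw [← add_assoc, ← add_assoc] at hright
    linarith

end Words

section Complexity

variable {α : ℝ} {m m' n : ℕ}

/-- The set of factors of length `n`. -/
def factorSet (α : ℝ) (n : ℕ) : Set (List Bool) := {w | w.length = n ∧ IsFactor α w}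

lemma factorSet_eq_range (α : ℝ) (n : ℕ) : factorSet α n = range fun m => word α m n := by
  ext w
  constructor
  · rintro ⟨rfl, m, hm⟩
    exact ⟨m, hm.symm⟩
  · rintro ⟨m, rfl⟩
    exact ⟨length_word, m, by rw [length_word]⟩

lemma word_mem_factorSet (α : ℝ) (m n : ℕ) : word α m n ∈ factorSet α n :=
  factorSet_eq_range α n ▸ mem_range_self m

lemma finite_factorSet (α : ℝ) (n : ℕ) : (factorSet α n).Finite :=
  (List.finite_length_eq Bool n).subset fun _ hw => hw.1

/-- The indices `1 ≤ i ≤ n` for which adding `iα` to a real number with fractional part `x`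
produces a carry. -/
def carries (α : ℝ) (n : ℕ) (x : ℝ) : Finset ℕ :=
  (Finset.Icc 1 n).filter fun i => 1 ≤ x + Int.fract (i * α)

lemma carries_mono (α : ℝ) (n : ℕ) : Monotone (carries α n) := fun _ _ hxy =>
  Finset.monotone_filter_right _ fun _ _ hi => hi.trans (by gcongr)

lemma card_carries_le (α : ℝ) (n : ℕ) (x : ℝ) : (carries α n x).card ≤ n :=
  (Finset.card_filter_le _ _).trans (by simp)

lemma carries_eq_of_card_eq {x y : ℝ} (h : (carries α n x).card = (carries α n y).card) :
    carries α n x = carries α n y := by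
  rcases le_total x y with hxy | hyx
  · exact Finset.eq_of_subset_of_card_le (carries_mono α n hxy) h.ge
  · exact (Finset.eq_of_subset_of_card_le (carries_mono α n hyx) h.le).symm

lemma beattySeq_add_natCast (p : ℤ) {i : ℕ} (hi : i ≤ n) :
    beattySeq α (p + i) = beattySeq α p + beattySeq α i +
      if i ∈ carries α n (Int.fract (p * α)) then 1 else 0 := by
  have hp := Int.floor_add_fract ((p : ℝ) * α)
  have hp0 := Int.fract_nonneg ((p : ℝ) * α)
  have hp1 := Int.fract_lt_one ((p : ℝ) * α)
  have hq := Int.floor_add_fract ((i : ℝ) * α)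
  have hq0 := Int.fract_nonneg ((i : ℝ) * α)
  have hq1 := Int.fract_lt_one ((i : ℝ) * α)
  have hmem : i ∈ carries α n (Int.fract (p * α)) ↔
      1 ≤ Int.fract ((p : ℝ) * α) + Int.fract ((i : ℝ) * α) := by
    rcases i.eq_zero_or_pos with rfl | hpos
    · simpa [carries] using hp1
    · simp [carries, hi, Nat.succ_le_iff.2 hpos]
  simp only [beattySeq, hmem, Int.floor_eq_iff]
  split_ifs <;> push_cast <;> constructor <;> linarith

lemma word_eq_word_of_card_carries_eq (h0 : 0 ≤ α) (h1 : α ≤ 1)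
    (h : (carries α n (Int.fract ((m + 1 : ℤ) * α))).card =
      (carries α n (Int.fract ((m' + 1 : ℤ) * α))).card) :
    word α m n = word α m' n := by
  refine (word_eq_word_iff_beattySeq h0 h1).2
    ⟨beattySeq α (m' + 1) - beattySeq α (m + 1), fun i hi => ?_⟩
  rw [beattySeq_add_natCast _ hi, beattySeq_add_natCast _ hi, carries_eq_of_card_eq h]
  ring

lemma ncard_factorSet_le (h0 : 0 ≤ α) (h1 : α ≤ 1) (n : ℕ) : (factorSet α n).ncard ≤ n + 1 := by
  have hthrough : Function.FactorsThrough (fun m => word α m n)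
      fun m : ℕ => (carries α n (Int.fract ((m + 1 : ℤ) * α))).card :=
    fun _ _ h => word_eq_word_of_card_carries_eq h0 h1 h
  obtain ⟨g, hg⟩ := (Function.factorsThrough_iff _).1 hthrough
  have hsub : factorSet α n ⊆ g '' Iic n := by
    rw [factorSet_eq_range, hg, range_comp]
    exact image_mono (range_subset_iff.2 fun _ => card_carries_le α n _)
  calc (factorSet α n).ncard
      ≤ (g '' Iic n).ncard := ncard_le_ncard hsub ((finite_Iic n).image g)
    _ ≤ (Iic n).ncard := ncard_image_le (finite_Iic n)
    _ = n + 1 := by rw [← Finset.coe_Iic, ncard_coe_finset, Nat.card_Iic]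

end Complexity

section Approximation

variable {α : ℝ} {a m n : ℕ}

lemma beattySeq_add_add_beattySeq_sub {N d G : ℤ}
    (h : ∀ c : ℤ, |(N : ℝ) * α - G| < |(d : ℝ) * α - c|) :
    beattySeq α (N + d) + beattySeq α (N - d) = 2 * G - 1 := by
  have hbelow := h ⌊(d : ℝ) * α⌋
  have habove := h (⌊(d : ℝ) * α⌋ + 1)
  have hfloor := Int.floor_le ((d : ℝ) * α)
  have hlt := Int.lt_floor_add_one ((d : ℝ) * α)
  push_cast at habove
  rw [abs_of_nonneg (sub_nonneg.2 hfloor), abs_lt] at hbelow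
  rw [abs_of_neg (a := (d : ℝ) * α - _) (by linarith), abs_lt] at habove
  have hadd : beattySeq α (N + d) = G + ⌊(d : ℝ) * α⌋ := by
    rw [beattySeq, Int.floor_eq_iff]
    push_cast
    constructor <;> linarith
  have hsub : beattySeq α (N - d) = G - ⌊(d : ℝ) * α⌋ - 1 := by
    rw [beattySeq, Int.floor_eq_iff]
    push_cast
    constructor <;> linarith
  rw [hadd, hsub]
  ring

lemma word_add_ne_word (h0 : 0 ≤ α) (h1 : α ≤ 1) {N d : ℕ} {G : ℤ}
    (hle : m + d + 1 ≤ N) (hge : N ≤ m + n + 1)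
    (h : ∀ c : ℤ, |(N : ℝ) * α - G| < |(d : ℝ) * α - c|) :
    word α (m + d) n ≠ word α m n := by
  intro heq
  obtain ⟨c, hc⟩ := (word_eq_word_iff_beattySeq h0 h1).1 heq.symm
  have hright := hc (N - m - 1) (by omega)
  have hleft := hc (N - m - 1 - d) (by omega)
  rw [show ((m + d : ℕ) : ℤ) + 1 + (N - m - 1 : ℕ) = N + d by omega,
    show (m : ℤ) + 1 + (N - m - 1 : ℕ) = N by omega] at hright
  rw [show ((m + d : ℕ) : ℤ) + 1 + (N - m - 1 - d : ℕ) = N by omega,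
    show (m : ℤ) + 1 + (N - m - 1 - d : ℕ) = N - d by omega] at hleft
  have hodd := beattySeq_add_add_beattySeq_sub (N := N) (d := d) h
  omega

lemma injOn_word_Icc (h0 : 0 ≤ α) (h1 : α ≤ 1) {N : ℕ} {G : ℤ} (hN : N = a + n + 1)
    (h : ∀ d c : ℤ, 0 < d → d < N → |(N : ℝ) * α - G| < |(d : ℝ) * α - c|) :
    InjOn (fun m => word α m n) (Icc a (a + n)) := by
  have hne : ∀ m ∈ Icc a (a + n), ∀ m' ∈ Icc a (a + n), m < m' → word α m' n ≠ word α m n := by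
    rintro m ⟨ham, -⟩ m' ⟨-, hm'⟩ hlt
    obtain ⟨d, rfl⟩ := Nat.exists_eq_add_of_le hlt.le
    exact word_add_ne_word h0 h1 (N := N) (by omega) (by omega)
      fun c => h d c (by omega) (by omega)
  intro m hm m' hm' heq
  by_contra hmm
  rcases lt_or_gt_of_ne hmm with hlt | hgt
  · exact hne m hm m' hm' hlt heq.symm
  · exact hne m' hm' m hm hgt heq

lemma bijOn_word_factorSet (h0 : 0 ≤ α) (h1 : α ≤ 1)
    (hinj : InjOn (fun m => word α m n) (Icc a (a + n))) :
    BijOn (fun m => word α m n) (Icc a (a + n)) (factorSet α n) := by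
  have hsub : (fun m => word α m n) '' Icc a (a + n) ⊆ factorSet α n :=
    image_subset_iff.2 fun m _ => word_mem_factorSet α m n
  have hcard : ((fun m => word α m n) '' Icc a (a + n)).ncard = n + 1 := by
    rw [hinj.ncard_image, ← Finset.coe_Icc, ncard_coe_finset, Nat.card_Icc]
    omega
  have himage : (fun m => word α m n) '' Icc a (a + n) = factorSet α n :=
    eq_of_subset_of_ncard_le hsub (hcard ▸ ncard_factorSet_le h0 h1 n) (finite_factorSet α n)
  exact himage ▸ hinj.bijOn_image

lemma beattySeq_add_eq_add (hα : Irrational α) {p q e : ℤ} (hpq : p + q ≠ 0)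
    (h : ∀ c : ℤ, |(q : ℝ) * α - e| ≤ |(p : ℝ) * α - c|) :
    beattySeq α (p + q) = beattySeq α p + e := by
  have hbelow := h ⌊(p : ℝ) * α⌋
  have habove := h (⌊(p : ℝ) * α⌋ + 1)
  have hfloor := Int.floor_le ((p : ℝ) * α)
  have hlt := Int.lt_floor_add_one ((p : ℝ) * α)
  have hne := (hα.intCast_mul hpq).ne_int (⌊(p : ℝ) * α⌋ + e + 1)
  push_cast at habove hne
  rw [abs_of_nonneg (sub_nonneg.2 hfloor), abs_le] at hbelow
  rw [abs_of_neg (a := (p : ℝ) * α - _) (by linarith), abs_le] at habove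
  rw [beattySeq, beattySeq, Int.floor_eq_iff]
  push_cast
  exact ⟨by linarith, lt_of_le_of_ne (by linarith) hne⟩

lemma word_add_eq_word (h0 : 0 ≤ α) (h1 : α ≤ 1) (hα : Irrational α) {q Q : ℕ} {e : ℤ}
    (h : ∀ p c : ℤ, 0 < p → p < Q → |(q : ℝ) * α - e| ≤ |(p : ℝ) * α - c|)
    (hQ : m + n + 1 < Q) : word α (m + q) n = word α m n := by
  refine ((word_eq_word_iff_beattySeq h0 h1).2 ⟨e, fun i hi => ?_⟩).symm
  rw [← beattySeq_add_eq_add hα (p := m + 1 + i) (q := q) (by omega)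
    fun c => h _ c (by omega) (by omega)]
  congr 1
  push_cast
  ring

end Approximation

section RepeatedPrefix

variable {β : Type*} {f : ℕ → β} {a b q m : ℕ}

lemma eq_or_add_eq_of_injOn_Icc (hinj : InjOn f (Icc a b)) (haq : a ≤ q) (hqb : a + q ≤ b)
    (hadd : ∀ x < a, f (x + q) = f x) {x : ℕ} (hx : x ≤ b) (hm : m ∈ Icc a b) (h : f x = f m) :
    x = m ∨ x < a ∧ x + q = m := by
  rcases lt_or_ge x a with hxa | hax
  · exact Or.inr ⟨hxa, hinj ⟨by omega, by omega⟩ hm ((hadd x hxa).trans h)⟩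
  · exact Or.inl (hinj ⟨hax, hx⟩ hm h)

lemma injOn_Iio_of_injOn_Icc (hinj : InjOn f (Icc a b)) (haq : a ≤ q) (hqb : a + q ≤ b)
    (hadd : ∀ x < a, f (x + q) = f x) : InjOn f (Iio a) := by
  intro x (hx : x < a) y (hy : y < a) h
  have hxy := hinj (⟨by omega, by omega⟩ : x + q ∈ Icc a b) (⟨by omega, by omega⟩ : y + q ∈ Icc a b)
    (by rw [hadd x hx, hadd y hy, h])
  omega

lemma setOf_le_and_eq_eq_pair (hinj : InjOn f (Icc a b)) (haq : a ≤ q) (hqb : a + q ≤ b)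
    (hadd : ∀ x < a, f (x + q) = f x) (hm : m < a) :
    {x | x ≤ b ∧ f x = f m} = {m, m + q} := by
  ext x
  constructor
  · rintro ⟨hx, h⟩
    rcases eq_or_add_eq_of_injOn_Icc hinj haq hqb hadd hx ⟨by omega, by omega⟩
      (h.trans (hadd m hm).symm) with rfl | ⟨-, hxm⟩
    · exact Or.inr rfl
    · exact Or.inl (by omega)
  · rintro (rfl | rfl)
    · exact ⟨by omega, rfl⟩
    · exact ⟨by omega, hadd m hm⟩

lemma setOf_le_and_eq_eq_singleton (hinj : InjOn f (Icc a b)) (hm : m ∈ Icc a b)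
    (hnew : ∀ x < a, f x ≠ f m) : {x | x ≤ b ∧ f x = f m} = {m} := by
  ext x
  constructor
  · rintro ⟨hx, h⟩
    exact hinj ⟨not_lt.1 fun hxa => hnew x hxa h, hx⟩ hm h
  · rintro rfl
    exact ⟨hm.2, rfl⟩

end RepeatedPrefix

section Occurrences

variable {α : ℝ} {a b n N : ℕ} {w : List Bool}

lemma occursIn_iff (hw : w.length = n) :
    OccursIn α w N ↔ ∃ m, m + n ≤ N ∧ word α m n = w := by
  subst hw
  simp only [OccursIn, eq_comm]

lemma occCount_add_eq_ncard (hn : 0 < n) (hw : w.length = n) (b : ℕ) :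
    occCount α w (b + n) = {m | m ≤ b ∧ word α m n = w}.ncard := by
  subst hw
  rw [occCount, ← ncard_coe_finset]
  congr 1
  ext m
  simp only [Finset.coe_filter, Finset.mem_range, mem_ofPred_eq, add_le_add_iff_right]
  exact and_iff_right_of_imp fun h => by omega

lemma exhaust_eq_add (hcover : ∀ w ∈ factorSet α n, ∃ m ≤ b, word α m n = w)
    (hlast : ∀ m < b, word α m n ≠ word α b n) : exhaust α n = b + n := by
  have hmem : ∀ w : List Bool, w.length = n → IsFactor α w → OccursIn α w (b + n) := by
    intro w hw hfac
    obtain ⟨m, hmb, hm⟩ := hcover w ⟨hw, hfac⟩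
    exact (occursIn_iff hw).2 ⟨m, by omega, hm⟩
  refine IsLeast.csInf_eq ⟨hmem, fun M hM => ?_⟩
  obtain ⟨m, hmM, hm⟩ :=
    (occursIn_iff length_word).1 (hM _ length_word (word_mem_factorSet α b n).2)
  have hbm : b ≤ m := not_lt.1 fun hmb => hlast m hmb hm
  omega

lemma setOf_occursIn_eq_image (hN : N + 1 = a + n) :
    {w : List Bool | w.length = n ∧ IsFactor α w ∧ OccursIn α w N} =
      (fun m => word α m n) '' Iio a := by
  ext w
  constructor
  · rintro ⟨hw, -, hocc⟩
    obtain ⟨m, hmN, hm⟩ := (occursIn_iff hw).1 hocc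
    exact ⟨m, by rw [mem_Iio]; omega, hm⟩
  · rintro ⟨m, hma : m < a, rfl⟩
    exact ⟨length_word, (word_mem_factorSet α m n).2,
      (occursIn_iff length_word).2 ⟨m, by omega, rfl⟩⟩

end Occurrences

/-- The windows of length `n` starting at `a, …, a + n` list every factor of length `n` exactly
once, and each window starting before `a` is repeated `q` places later, among the listed ones. -/
structure IsFactorListing (α : ℝ) (n a q : ℕ) : Prop where
  bijOn : BijOn (fun m => word α m n) (Icc a (a + n)) (factorSet α n)
  word_add : ∀ m < a, word α (m + q) n = word α m n
  le_shift : a ≤ q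
  shift_le : q ≤ n

namespace IsFactorListing

variable {α : ℝ} {n a q N : ℕ} {w : List Bool}

lemma exhaust_eq (h : IsFactorListing α n a q) : exhaust α n = a + n + n := by
  refine exhaust_eq_add (fun w hw => ?_) fun m hm heq => ?_
  · obtain ⟨m, hm, hmw⟩ := h.bijOn.surjOn hw
    exact ⟨m, hm.2, hmw⟩
  · have hcases := eq_or_add_eq_of_injOn_Icc h.bijOn.injOn h.le_shift
      (Nat.add_le_add_left h.shift_le a) h.word_add hm.le ⟨by omega, le_rfl⟩ heq
    have hqn := h.shift_le
    omega

lemma ncard_occursIn (h : IsFactorListing α n a q) (hN : N + 1 = a + n) :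
    {w | w.length = n ∧ IsFactor α w ∧ OccursIn α w N}.ncard = a := by
  have hinj := injOn_Iio_of_injOn_Icc h.bijOn.injOn h.le_shift
    (Nat.add_le_add_left h.shift_le a) h.word_add
  rw [setOf_occursIn_eq_image hN, hinj.ncard_image, ← Finset.coe_Iio, ncard_coe_finset,
    Nat.card_Iio]

lemma ncard_factorSet (h : IsFactorListing α n a q) : (factorSet α n).ncard = n + 1 := by
  rw [← h.bijOn.image_eq, h.bijOn.injOn.ncard_image, ← Finset.coe_Icc, ncard_coe_finset,
    Nat.card_Icc]
  omega

lemma ncard_not_occursIn (h : IsFactorListing α n a q) (hN : N + 1 = a + n) :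
    {w | w.length = n ∧ IsFactor α w ∧ ¬ OccursIn α w N}.ncard = n + 1 - a := by
  have hsub : {w | w.length = n ∧ IsFactor α w ∧ OccursIn α w N} ⊆ factorSet α n :=
    fun _ hw => ⟨hw.1, hw.2.1⟩
  have hdiff : {w | w.length = n ∧ IsFactor α w ∧ ¬ OccursIn α w N} =
      factorSet α n \ {w | w.length = n ∧ IsFactor α w ∧ OccursIn α w N} := by
    ext w
    simp only [factorSet, mem_ofPred_eq, mem_sdiff]
    tauto
  rw [hdiff, ncard_sdiff hsub ((finite_factorSet α n).subset hsub), h.ncard_factorSet,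
    h.ncard_occursIn hN]

lemma occCount_eq_two (h : IsFactorListing α n a q) (hn : 0 < n) (hN : N + 1 = a + n)
    (hw : w.length = n) (hocc : OccursIn α w N) : occCount α w (exhaust α n) = 2 := by
  obtain ⟨m, hmN, rfl⟩ := (occursIn_iff hw).1 hocc
  have hma : m < a := by omega
  have hq : m ≠ m + q := by have := h.le_shift; omega
  rw [h.exhaust_eq, occCount_add_eq_ncard hn hw,
    setOf_le_and_eq_eq_pair h.bijOn.injOn h.le_shift (Nat.add_le_add_left h.shift_le a)
      h.word_add hma, ncard_pair hq]

lemma occCount_eq_one (h : IsFactorListing α n a q) (hn : 0 < n) (hN : N + 1 = a + n)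
    (hw : w ∈ factorSet α n) (hocc : ¬ OccursIn α w N) : occCount α w (exhaust α n) = 1 := by
  obtain ⟨m, hm, rfl⟩ := h.bijOn.surjOn hw
  have hnew : ∀ x < a, word α x n ≠ word α m n := fun x hx heq =>
    hocc ((occursIn_iff length_word).2 ⟨x, by omega, heq⟩)
  rw [h.exhaust_eq, occCount_add_eq_ncard hn hw.1,
    setOf_le_and_eq_eq_singleton h.bijOn.injOn hm hnew, ncard_singleton]

end IsFactorListing

section GoldenRatio

lemma inv_goldenRatio_le_one : φ⁻¹ ≤ 1 := inv_le_one_of_one_le₀ Real.one_lt_goldenRatio.le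

lemma inv_goldenRatio_sq : φ⁻¹ ^ 2 = 1 - φ⁻¹ := by
  rw [Real.inv_goldenRatio, neg_sq, Real.goldenConj_sq]
  ring

lemma abs_fib_mul_inv_goldenRatio_sub_fib (n : ℕ) :
    |Nat.fib (n + 1) * φ⁻¹ - Nat.fib n| = φ⁻¹ ^ (n + 1) := by
  rw [Real.inv_goldenRatio,
    show (Nat.fib (n + 1) : ℝ) * -ψ - Nat.fib n = -(ψ ^ (n + 1)) by
      rw [← Real.goldenConj_mul_fib_succ_add_fib]; ring,
    abs_neg, abs_pow, abs_of_neg Real.goldenConj_neg]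

/-- The Euclidean step `(p, c) ↦ (c, p - c)` that makes best approximation an induction. -/
lemma abs_mul_inv_goldenRatio_sub (p c : ℝ) :
    |p * φ⁻¹ - c| = φ⁻¹ * |c * φ⁻¹ - (p - c)| := by
  have hpos := inv_pos.2 Real.goldenRatio_pos
  rw [← abs_of_pos hpos, ← abs_mul, abs_of_pos hpos, ← abs_neg]
  congr 1
  linear_combination -c * inv_goldenRatio_sq

lemma inv_goldenRatio_pow_le_abs_mul_sub {n : ℕ} {p : ℤ} (hp : 0 < p) (hpn : p < Nat.fib (n + 2))
    (c : ℤ) : φ⁻¹ ^ (n + 1) ≤ |(p : ℝ) * φ⁻¹ - c| := by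
  have hpos := inv_pos.2 Real.goldenRatio_pos
  have hle := inv_goldenRatio_le_one
  induction n generalizing p c with
  | zero =>
    have hp1 : p < 1 := by simpa using hpn
    omega
  | succ n ih =>
    have hp1 : (1 : ℝ) ≤ p := mod_cast hp
    rcases le_or_gt c 0 with hc | hc
    · have hc' : (c : ℝ) ≤ 0 := mod_cast hc
      calc φ⁻¹ ^ (n + 2) ≤ φ⁻¹ := pow_le_of_le_one hpos.le hle (by omega)
        _ ≤ p * φ⁻¹ - c := by nlinarith
        _ ≤ |p * φ⁻¹ - c| := le_abs_self _
    rcases lt_or_ge c (Nat.fib (n + 2)) with hcn | hcn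
    · calc φ⁻¹ ^ (n + 2) = φ⁻¹ * φ⁻¹ ^ (n + 1) := pow_succ' _ _
        _ ≤ φ⁻¹ * |c * φ⁻¹ - (p - c)| := by
          gcongr
          exact_mod_cast ih hc hcn (p - c)
        _ = |p * φ⁻¹ - c| := (abs_mul_inv_goldenRatio_sub _ _).symm
    · have hp' : (p : ℝ) + 1 ≤ Nat.fib (n + 3) := mod_cast hpn
      have hc' : (Nat.fib (n + 2) : ℝ) ≤ c := mod_cast hcn
      have hfib : Nat.fib (n + 3) * φ⁻¹ - Nat.fib (n + 2) ≤ φ⁻¹ ^ (n + 3) :=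
        (le_abs_self _).trans (abs_fib_mul_inv_goldenRatio_sub_fib (n + 2)).le
      calc φ⁻¹ ^ (n + 2) ≤ φ⁻¹ - φ⁻¹ ^ 3 := by
            have : φ⁻¹ ^ (n + 2) ≤ φ⁻¹ ^ 2 := pow_le_pow_of_le_one hpos.le hle (by omega)
            linear_combination this + φ⁻¹ * inv_goldenRatio_sq
        _ ≤ φ⁻¹ - φ⁻¹ ^ (n + 3) := by
            gcongr 1
            exact pow_le_pow_of_le_one hpos.le hle (by omega)
        _ ≤ -(p * φ⁻¹ - c) := by nlinarith
        _ ≤ |p * φ⁻¹ - c| := neg_le_abs _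

lemma isFactorListing_fib {k n a : ℕ} (hkn : Nat.fib (k + 1) ≤ n)
    (ha : Nat.fib (k + 2) = a + n + 1) : IsFactorListing φ⁻¹ n a (Nat.fib (k + 1)) := by
  have h0 : 0 ≤ φ⁻¹ := inv_nonneg.2 Real.goldenRatio_pos.le
  have h1 := inv_goldenRatio_le_one
  have hbest : ∀ p c : ℤ, 0 < p → p < Nat.fib (k + 2) →
      |(Nat.fib (k + 1) : ℝ) * φ⁻¹ - (Nat.fib k : ℤ)| ≤ |(p : ℝ) * φ⁻¹ - c| := fun p c hp hpk => by
    rw [Int.cast_natCast, abs_fib_mul_inv_goldenRatio_sub_fib]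
    exact inv_goldenRatio_pow_le_abs_mul_sub hp hpk c
  have hcloser : |(Nat.fib (k + 2) : ℝ) * φ⁻¹ - (Nat.fib (k + 1) : ℤ)| <
      |(Nat.fib (k + 1) : ℝ) * φ⁻¹ - (Nat.fib k : ℤ)| := by
    rw [Int.cast_natCast, Int.cast_natCast, abs_fib_mul_inv_goldenRatio_sub_fib,
      abs_fib_mul_inv_goldenRatio_sub_fib]
    exact pow_lt_pow_right_of_lt_one₀ (inv_pos.2 Real.goldenRatio_pos)
      (inv_lt_one_of_one_lt₀ Real.one_lt_goldenRatio) (by omega)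
  have hmono : Nat.fib k ≤ Nat.fib (k + 1) := Nat.fib_mono (by omega)
  have hrec : Nat.fib (k + 2) = Nat.fib k + Nat.fib (k + 1) := Nat.fib_add_two
  exact
    { bijOn := bijOn_word_factorSet h0 h1 <| injOn_word_Icc h0 h1 ha fun d c hd hdk =>
        hcloser.trans_le (hbest d c hd hdk)
      word_add := fun m hm =>
        word_add_eq_word h0 h1 Real.goldenRatio_irrational.inv hbest (by omega)
      le_shift := by omega
      shift_le := hkn }

end GoldenRatio

/-- For `n = F_k + j` (`k ≥ 2`, `0 ≤ j ≤ F_{k-1} - 1`), the set `Aₙ` of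
factors of length `n` occurring in `(v₀(1), …, v₀(F_{k+1} - 2))` has `F_{k-1} - j - 1`
elements, each of which occurs exactly twice in `(v₀(1), …, v₀(f(n)))`, while each of
the remaining `F_{k-2} + 2j + 2` factors of length `n` occurs there exactly once. -/
theorem factor_classification_fib (α : ℝ) (hα : α = (Real.sqrt 5 - 1) / 2)
    (k j n : ℕ) (hk : 2 ≤ k) (hj : j ≤ F (k - 1) - 1) (hn : n = F k + j) :
    {w : List Bool | w.length = n ∧ IsFactor α w ∧ OccursIn α w (F (k + 1) - 2)}.ncard
        = F (k - 1) - j - 1 ∧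
    (∀ w : List Bool, w.length = n → IsFactor α w → OccursIn α w (F (k + 1) - 2) →
        occCount α w (exhaust α n) = 2) ∧
    {w : List Bool | w.length = n ∧ IsFactor α w ∧ ¬ OccursIn α w (F (k + 1) - 2)}.ncard
        = F (k - 2) + 2 * j + 2 ∧
    (∀ w : List Bool, w.length = n → IsFactor α w → ¬ OccursIn α w (F (k + 1) - 2) →
        occCount α w (exhaust α n) = 1) := by
  obtain ⟨l, rfl⟩ := Nat.exists_eq_add_of_le' hk
  simp only [F, show l + 2 - 1 = l + 1 by omega, Nat.add_sub_cancel, Nat.add_assoc,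
    Nat.reduceAdd] at hj hn ⊢
  have hφ : α = φ⁻¹ := by
    rw [hα, Real.inv_goldenRatio, Real.goldenConj]
    ring
  have hpos : 0 < Nat.fib (l + 2) := Nat.fib_pos.2 (by omega)
  have hrec : Nat.fib (l + 3) = Nat.fib (l + 1) + Nat.fib (l + 2) := Nat.fib_add_two
  have hrec' : Nat.fib (l + 4) = Nat.fib (l + 2) + Nat.fib (l + 3) := Nat.fib_add_two
  have hlist : IsFactorListing α n (Nat.fib (l + 2) - j - 1) (Nat.fib (l + 3)) :=
    hφ ▸ isFactorListing_fib (k := l + 2) (show Nat.fib (l + 3) ≤ n by omega)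
      (show Nat.fib (l + 4) = _ by omega)
  have hN : Nat.fib (l + 4) - 2 + 1 = Nat.fib (l + 2) - j - 1 + n := by omega
  refine ⟨hlist.ncard_occursIn hN, fun w hw _ hocc => hlist.occCount_eq_two (by omega) hN hw hocc,
    ?_, fun w hw hfac hocc => hlist.occCount_eq_one (by omega) hN ⟨hw, hfac⟩ hocc⟩
  rw [hlist.ncard_not_occursIn hN]
  omega

end
end

section
/- Let k ≥ 2, 0 ≤ j ≤ F_{k−1} − 1, and n = F_k + j. For a factor w of v₀ of length n let I(w) = {θ ∈ [0,1) : (v_θ(0), v_θ(1), …, v_θ(n−1)) = w}. Then the Lebesgue measure of I(w) belongs to {τ^{−(k−1)}, τ^{−k}, τ^{−(k+1)}}; it equals τ^{−(k−1)} precisely when w occurs in the prefix (v₀(1), …, v₀(F_{k+1} − 2)), and the number of factors w of length n with measure τ^{−(k−1)}, τ^{−k}, τ^{−(k+1)} is F_{k−1} − j − 1, F_{k−2} + j + 1, and j + 1 respectively. -/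
open scoped Classical

noncomputable section

/-- The circle map sequence with phase `θ`. -/
def vth (α θ : ℝ) (n : ℤ) : Bool := decide (1 - α ≤ Int.fract ((n : ℝ) * α + θ))

/-- `I(w) = {θ ∈ [0,1) : (v_θ(0), …, v_θ(n-1)) = w}` for a word `w` of length `n`. -/
def phaseSet (α : ℝ) (w : List Bool) : Set ℝ :=
  {θ : ℝ | θ ∈ Set.Ico (0 : ℝ) 1 ∧ wordAt (vth α θ) 0 w.length = w}

/-! For a fixed length `n`, the word `(v_θ(0), …, v_θ(n - 1))` is constant on each arc between
consecutive points of `{-iα}`, `0 ≤ i ≤ n`, and distinct arcs carry distinct words; so the measures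
in question are the gap lengths between these points.

Let `p / q < α < p' / q'` be Farey neighbours with `q, q' ≤ n < q + q'`, and put `δ = qα - p`,
`δ' = p' - q'α`. Every `dα - P` with integers `d, P` is an integral combination `xδ + yδ'` with
`d = xq - yq'`. If it is nonnegative and `0 < |d| ≤ n`, then `x` and `y` are nonnegative. Hence the
gap starting at `{-iα}` is `δ` if `q ≤ i`, `δ'` if `i + q' ≤ n`, and `δ + δ'` otherwise. The point
`{(q - i)α}` lies `δ` above `{-iα}`, so a word with a long gap occurs at position `q - i` of `v₀`.

For the golden rotation number, consecutive Fibonacci numbers are the denominators of Farey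
neighbours, and the defects are powers of `1 / τ`. -/

open Nat (fib)
open Set (Icc Ico Iic Ioo InjOn)
open MeasureTheory (volume)
open scoped goldenRatio

/-- The endpoint `{-iα}` of the circle arcs coding `v_θ(i - 1)` and `v_θ(i)`: the word
`(v_θ(0), …, v_θ(n - 1))`, as a function of `θ ∈ [0, 1)`, can change only where `θ` passes one of
the breakpoints of index `0, …, n`. -/
def breakpoint (α : ℝ) (i : ℕ) : ℝ := Int.fract (-(i * α))

/-- The word of length `n` read off at the phase `breakpoint α i`. -/
def breakWord (α : ℝ) (n i : ℕ) : List Bool := wordAt (vth α (breakpoint α i)) 0 n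

/-- `g` is the distance from the breakpoint of index `i` to the next one, in the positive direction
of the circle `ℝ ⧸ ℤ`, among the breakpoints of index `0, …, n`. -/
structure IsGap (α : ℝ) (n i : ℕ) (g : ℝ) : Prop where
  le : i ≤ n
  pos : 0 < g
  isLeast : IsLeast
    ((fun l : ℕ => Int.fract (breakpoint α l - breakpoint α i)) '' {l | l ≤ n ∧ l ≠ i}) g

/-- Two Farey neighbours `p / q < α < p' / q'`, recorded by their denominators and the defects
`δ = q α - p` and `δ' = p' - q' α`. In terms of these the condition `p' q - p q' = 1` becomes
`q δ' + q' δ = 1`. -/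
structure IsFareyPair (α δ δ' : ℝ) (q q' : ℕ) : Prop where
  left_pos : 0 < δ
  right_pos : 0 < δ'
  exists_left : ∃ p : ℤ, q * α - p = δ
  exists_right : ∃ p' : ℤ, p' - q' * α = δ'
  add_eq_one : q * δ' + q' * δ = 1

/-- The three-gap function: for a Farey pair with `q, q' ≤ n < q + q'`, the distance from the
breakpoint of index `i` to the next one. -/
def fareyGap (δ δ' : ℝ) (q q' n i : ℕ) : ℝ :=
  if q ≤ i then δ else if i + q' ≤ n then δ' else δ + δ'

section Coding

variable {α θ θ' : ℝ} {n : ℕ}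

lemma breakpoint_mem_Ico (α : ℝ) (i : ℕ) : breakpoint α i ∈ Ico (0 : ℝ) 1 :=
  ⟨Int.fract_nonneg _, Int.fract_lt_one _⟩

lemma breakpoint_zero (α : ℝ) : breakpoint α 0 = 0 := by simp [breakpoint]

lemma fract_breakpoint_sub_breakpoint (α : ℝ) (i l : ℕ) :
    Int.fract (breakpoint α l - breakpoint α i) = Int.fract (((i - l : ℤ) : ℝ) * α) := by
  refine Int.fract_eq_fract.2 ⟨⌊-(i * α)⌋ - ⌊-(l * α)⌋, ?_⟩
  simp only [breakpoint, Int.fract]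
  push_cast
  ring

lemma fract_sub_of_lt {x y : ℝ} (hx : x ∈ Ico (0 : ℝ) 1) (hy : y ∈ Ico (0 : ℝ) 1) (h : y < x) :
    Int.fract (y - x) = y - x + 1 :=
  Int.fract_eq_iff.2 ⟨by linarith [hx.2, hy.1], by linarith, -1, by push_cast; ring⟩

lemma floor_mul_add_eq (hθ : θ ∈ Ico (0 : ℝ) 1) (i : ℕ) :
    ⌊i * α + θ⌋ = -⌊-(i * α)⌋ - if breakpoint α i ≤ θ then 0 else 1 := by
  obtain ⟨hnonneg, hlt⟩ := breakpoint_mem_Ico α i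
  have hfloor : breakpoint α i = -(i * α) - ⌊-(i * α)⌋ := rfl
  obtain ⟨hθ₀, hθ₁⟩ := hθ
  rw [Int.floor_eq_iff]
  split_ifs <;> push_cast <;> constructor <;> linarith

lemma floor_succ_mul_add (hα : α ∈ Icc (0 : ℝ) 1) (θ : ℝ) (l : ℕ) :
    ⌊((l + 1 : ℕ) : ℝ) * α + θ⌋ = ⌊l * α + θ⌋ + if vth α θ l then 1 else 0 := by
  have hnonneg := Int.fract_nonneg (l * α + θ)
  have hlt := Int.fract_lt_one (l * α + θ)
  have hadd := Int.floor_add_fract (l * α + θ)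
  obtain ⟨hα₀, hα₁⟩ := hα
  rw [Int.floor_eq_iff]
  simp only [vth, decide_eq_true_eq, Int.cast_natCast]
  split_ifs <;> push_cast <;> constructor <;> linarith

lemma wordAt_zero_eq_wordAt_zero_iff {u v : ℤ → Bool} :
    wordAt u 0 n = wordAt v 0 n ↔ ∀ l : ℕ, l < n → u l = v l := by
  have hcast : (∀ a : ℤ, ∀ l < n, a = (l : ℕ) → u a = v a) ↔ ∀ l : ℕ, l < n → u l = v l :=
    ⟨fun h l hl => h l l hl rfl, fun h a l hl ha => ha ▸ h l hl⟩
  simpa [wordAt] using hcast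

lemma wordAt_vth_eq_iff_floor (hα : α ∈ Icc (0 : ℝ) 1) (hθ : θ ∈ Ico (0 : ℝ) 1)
    (hθ' : θ' ∈ Ico (0 : ℝ) 1) :
    wordAt (vth α θ) 0 n = wordAt (vth α θ') 0 n ↔ ∀ i ≤ n, ⌊i * α + θ⌋ = ⌊i * α + θ'⌋ := by
  rw [wordAt_zero_eq_wordAt_zero_iff]
  refine ⟨fun h i => ?_, fun h l hl => ?_⟩
  · induction i with
    | zero => simp [Int.floor_eq_zero_iff.2 hθ, Int.floor_eq_zero_iff.2 hθ']
    | succ l ih =>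
      intro hl
      rw [floor_succ_mul_add hα, floor_succ_mul_add hα, ih (by omega), h l (by omega)]
  · have hsucc := h (l + 1) hl
    rw [floor_succ_mul_add hα, floor_succ_mul_add hα, h l hl.le, add_right_inj] at hsucc
    cases hv : vth α θ l <;> cases hv' : vth α θ' l <;> simp_all

lemma wordAt_vth_eq_iff_breakpoint (hα : α ∈ Icc (0 : ℝ) 1) (hθ : θ ∈ Ico (0 : ℝ) 1)
    (hθ' : θ' ∈ Ico (0 : ℝ) 1) :
    wordAt (vth α θ) 0 n = wordAt (vth α θ') 0 n ↔
      ∀ i ≤ n, (breakpoint α i ≤ θ ↔ breakpoint α i ≤ θ') := by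
  rw [wordAt_vth_eq_iff_floor hα hθ hθ']
  refine forall₂_congr fun i _ => ?_
  rw [floor_mul_add_eq hθ, floor_mul_add_eq hθ', sub_right_inj]
  split_ifs with h h' h' <;> simp [h, h']

lemma word_eq_wordAt (α : ℝ) (p n : ℕ) :
    word α p n = wordAt (vth α (Int.fract ((p + 1 : ℕ) * α))) 0 n := by
  refine List.map_congr_left fun l _ => ?_
  have hphase : Int.fract (((p + 1 + l : ℤ) : ℝ) * α) =
      Int.fract (((0 + l : ℤ) : ℝ) * α + Int.fract ((p + 1 : ℕ) * α)) := by
    refine Int.fract_eq_fract.2 ⟨⌊(p + 1 : ℕ) * α⌋, ?_⟩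
    simp only [Int.fract]
    push_cast
    ring
  simp only [v0, vth, hphase]

lemma length_breakWord (α : ℝ) (n i : ℕ) : (breakWord α n i).length = n := by
  simp [breakWord, wordAt]

-- The breakpoint in question is the largest one not exceeding `θ`.
lemma exists_wordAt_eq_breakWord (hα : α ∈ Icc (0 : ℝ) 1) (hθ : θ ∈ Ico (0 : ℝ) 1) (n : ℕ) :
    ∃ i ≤ n, wordAt (vth α θ) 0 n = breakWord α n i := by
  obtain ⟨i, hi, hmax⟩ := Finset.exists_max_image
    ((Finset.range (n + 1)).filter fun i => breakpoint α i ≤ θ) (breakpoint α)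
    ⟨0, by simpa [breakpoint_zero] using hθ.1⟩
  simp only [Finset.mem_filter, Finset.mem_range, Nat.lt_succ_iff] at hi hmax
  exact ⟨i, hi.1, (wordAt_vth_eq_iff_breakpoint hα hθ (breakpoint_mem_Ico α i)).2 fun l hl =>
    ⟨fun h => hmax l ⟨hl, h⟩, fun h => h.trans hi.2⟩⟩

lemma IsFactor.exists_eq_breakWord (hα : α ∈ Icc (0 : ℝ) 1) {w : List Bool}
    (hw : IsFactor α w) : ∃ i ≤ w.length, w = breakWord α w.length i := by
  obtain ⟨p, hp⟩ := hw
  obtain ⟨i, hi, h⟩ := exists_wordAt_eq_breakWord hα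
    ⟨Int.fract_nonneg ((p + 1 : ℕ) * α), Int.fract_lt_one _⟩ w.length
  exact ⟨i, hi, hp.trans ((word_eq_wordAt α p _).trans h)⟩

end Coding

lemma exists_nat_mul_sub_int_mem_Ioo {α a b : ℝ} (hα : Irrational α) (hab : a < b) :
    ∃ (n : ℕ) (z : ℤ), n * α - z ∈ Ioo a b := by
  have hdense : DenseRange (· • (α : AddCircle (1 : ℝ)) : ℕ → AddCircle (1 : ℝ)) :=
    denseRange_zsmul_iff_nsmul.1 (AddCircle.denseRange_zsmul_coe_iff.2 (by rwa [div_one]))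
  obtain ⟨x, ⟨n, hn⟩, hx⟩ := (QuotientAddGroup.dense_preimage_mk.2 hdense).exists_between hab
  have hzero : ((n * α - x : ℝ) : AddCircle (1 : ℝ)) = 0 := by
    rw [AddCircle.coe_sub, ← nsmul_eq_mul, AddCircle.coe_nsmul, sub_eq_zero]
    exact hn
  obtain ⟨z, hz⟩ := (AddCircle.coe_eq_zero_iff 1).1 hzero
  rw [zsmul_eq_mul, mul_one] at hz
  exact ⟨n, z, by rwa [hz, sub_sub_cancel]⟩

namespace IsGap

variable {α g : ℝ} {n i : ℕ}

lemma lt_one (hg : IsGap α n i g) : g < 1 := by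
  obtain ⟨l, -, rfl⟩ := hg.isLeast.1
  exact Int.fract_lt_one _

lemma le_fract (hg : IsGap α n i g) {l : ℕ} (hl : l ≤ n) (hne : l ≠ i) :
    g ≤ Int.fract (breakpoint α l - breakpoint α i) :=
  hg.isLeast.2 ⟨l, ⟨hl, hne⟩, rfl⟩

lemma breakpoint_add_le_one (hg : IsGap α n i g) : breakpoint α i + g ≤ 1 := by
  rcases (breakpoint_mem_Ico α i).1.eq_or_lt with h | h
  · linarith [hg.lt_one]
  · have hne : 0 ≠ i := by rintro rfl; exact h.ne' (breakpoint_zero α)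
    have hle := hg.le_fract n.zero_le hne
    rw [breakpoint_zero, fract_sub_of_lt (breakpoint_mem_Ico α i) (by simp) h] at hle
    linarith

lemma breakpoint_add_le_of_lt (hg : IsGap α n i g) {l : ℕ} (hl : l ≤ n)
    (h : breakpoint α i < breakpoint α l) : breakpoint α i + g ≤ breakpoint α l := by
  have hle := hg.le_fract hl (by rintro rfl; exact h.false)
  rw [Int.fract_eq_self.2 ⟨by linarith, by
    linarith [(breakpoint_mem_Ico α l).2, (breakpoint_mem_Ico α i).1]⟩] at hle
  linarith

lemma one_le_or_exists_breakpoint_eq (hg : IsGap α n i g) :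
    1 ≤ breakpoint α i + g ∨ ∃ l ≤ n, breakpoint α l = breakpoint α i + g := by
  obtain ⟨l, ⟨hl, -⟩, hlg⟩ := hg.isLeast.1
  have hmem := breakpoint_mem_Ico α
  dsimp only at hlg
  rcases lt_or_ge (breakpoint α l) (breakpoint α i) with h | h
  · rw [fract_sub_of_lt (hmem i) (hmem l) h] at hlg
    exact .inl (by linarith [(hmem l).1])
  · rw [Int.fract_eq_self.2 ⟨by linarith, by linarith [(hmem l).2, (hmem i).1]⟩] at hlg
    exact .inr ⟨l, hl, by linarith⟩

lemma wordAt_eq_breakWord_iff (hg : IsGap α n i g) (hα : α ∈ Icc (0 : ℝ) 1) {θ : ℝ}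
    (hθ : θ ∈ Ico (0 : ℝ) 1) :
    wordAt (vth α θ) 0 n = breakWord α n i ↔
      θ ∈ Ico (breakpoint α i) (breakpoint α i + g) := by
  rw [breakWord, wordAt_vth_eq_iff_breakpoint hα hθ (breakpoint_mem_Ico α i)]
  refine ⟨fun h => ⟨(h i hg.le).2 le_rfl, ?_⟩, fun ⟨hle, hlt⟩ l hl => ⟨fun hlθ => ?_, hle.trans'⟩⟩
  · rcases hg.one_le_or_exists_breakpoint_eq with hone | ⟨l, hl, hlg⟩
    · exact hθ.2.trans_le hone
    · by_contra! hge
      linarith [(h l hl).1 (hlg.trans_le hge), hg.pos]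
  · by_contra! hlt'
    linarith [hg.breakpoint_add_le_of_lt hl hlt']

lemma phaseSet_breakWord (hg : IsGap α n i g) (hα : α ∈ Icc (0 : ℝ) 1) :
    phaseSet α (breakWord α n i) = Ico (breakpoint α i) (breakpoint α i + g) := by
  ext θ
  have hmem (h : θ ∈ Ico (breakpoint α i) (breakpoint α i + g)) : θ ∈ Ico (0 : ℝ) 1 :=
    ⟨(breakpoint_mem_Ico α i).1.trans h.1, h.2.trans_le hg.breakpoint_add_le_one⟩
  rw [phaseSet, length_breakWord]
  exact ⟨fun h => (hg.wordAt_eq_breakWord_iff hα h.1).1 h.2,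
    fun h => ⟨hmem h, (hg.wordAt_eq_breakWord_iff hα (hmem h)).2 h⟩⟩

lemma volume_phaseSet_breakWord (hg : IsGap α n i g) (hα : α ∈ Icc (0 : ℝ) 1) :
    volume (phaseSet α (breakWord α n i)) = ENNReal.ofReal g := by
  rw [hg.phaseSet_breakWord hα, Real.volume_Ico, add_sub_cancel_left]

lemma breakWord_ne (hg : IsGap α n i g) (hα : α ∈ Icc (0 : ℝ) 1) {l : ℕ} (hl : l ≤ n)
    (hne : l ≠ i) : breakWord α n l ≠ breakWord α n i := fun h => by
  obtain ⟨hle, hlt⟩ := (hg.wordAt_eq_breakWord_iff hα (breakpoint_mem_Ico α l)).1 h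
  have hgap := hg.le_fract hl hne
  rw [Int.fract_eq_self.2 ⟨by linarith, by linarith [hg.lt_one]⟩] at hgap
  linarith

lemma word_eq_breakWord (hg : IsGap α n i g) (hα : α ∈ Icc (0 : ℝ) 1) {p : ℕ} {z : ℤ}
    (hz : ((p + 1 + i : ℕ) : ℝ) * α - z ∈ Ico 0 g) : word α p n = breakWord α n i := by
  have hphase : Int.fract ((p + 1 : ℕ) * α) =
      breakpoint α i + (((p + 1 + i : ℕ) : ℝ) * α - z) := by
    refine Int.fract_eq_iff.2 ⟨add_nonneg (breakpoint_mem_Ico α i).1 hz.1,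
      by linarith [hz.2, hg.breakpoint_add_le_one], z + ⌊-(i * α)⌋, ?_⟩
    simp only [breakpoint, Int.fract]
    push_cast
    ring
  rw [word_eq_wordAt, hg.wordAt_eq_breakWord_iff hα ⟨Int.fract_nonneg _, Int.fract_lt_one _⟩,
    hphase]
  exact ⟨by linarith [hz.1], by linarith [hz.2]⟩

lemma isFactor_breakWord (hg : IsGap α n i g) (hα : α ∈ Icc (0 : ℝ) 1) (hirr : Irrational α) :
    IsFactor α (breakWord α n i) := by
  obtain ⟨p, z, hpos, hlt⟩ := exists_nat_mul_sub_int_mem_Ioo hirr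
    (show -((1 + i) * α) < g - (1 + i) * α by linarith [hg.pos])
  refine ⟨p, ?_⟩
  rw [length_breakWord]
  refine (hg.word_eq_breakWord hα (z := z) ⟨?_, ?_⟩).symm <;> push_cast <;> linarith

end IsGap

namespace IsFareyPair

variable {α δ δ' : ℝ} {q q' n i : ℕ}

lemma exists_coords (h : IsFareyPair α δ δ' q q') (d P : ℤ) :
    ∃ x y : ℤ, d = x * q - y * q' ∧ d * α - P = x * δ + y * δ' := by
  obtain ⟨p, hp⟩ := h.exists_left
  obtain ⟨p', hp'⟩ := h.exists_right
  have hdet : (q * p' - q' * p : ℝ) = 1 := by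
    linear_combination h.add_eq_one + q * hp' + q' * hp
  have hdet' : (q * p' - q' * p : ℤ) = 1 := by exact_mod_cast hdet
  refine ⟨p' * d - q' * P, p * d - q * P, by linear_combination -d * hdet', ?_⟩
  push_cast
  linear_combination (P - d * α) * hdet + (p' * d - q' * P) * hp + (p * d - q * P) * hp'

lemma fareyGap_pos (h : IsFareyPair α δ δ' q q') : 0 < fareyGap δ δ' q q' n i := by
  have hδ := h.left_pos
  have hδ' := h.right_pos
  unfold fareyGap
  split_ifs <;> positivity

lemma coords_cases (h : IsFareyPair α δ δ' q q') {x y : ℤ} (hne : x * q - y * q' ≠ 0)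
    (hlt : |x * q - y * q'| < q + q') (hnonneg : 0 ≤ x * δ + y * δ') :
    1 ≤ x ∧ 1 ≤ y ∨ 1 ≤ x ∧ y = 0 ∨ x = 0 ∧ 1 ≤ y := by
  have hδ := h.left_pos
  have hδ' := h.right_pos
  obtain ⟨hlower, hupper⟩ := abs_lt.1 hlt
  rcases le_or_gt x 0 with hx | hx <;> rcases le_or_gt y 0 with hy | hy
  · have hx_real : (x : ℝ) ≤ 0 := by exact_mod_cast hx
    have hy_real : (y : ℝ) ≤ 0 := by exact_mod_cast hy
    obtain rfl : x = 0 := by exact_mod_cast (by nlinarith : (x : ℝ) = 0)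
    obtain rfl : y = 0 := by exact_mod_cast (by nlinarith : (y : ℝ) = 0)
    simp at hne
  · exact .inr (.inr ⟨by by_contra hx_ne; nlinarith [(by omega : x ≤ -1)], hy⟩)
  · exact .inr (.inl ⟨hx, by by_contra hy_ne; nlinarith [(by omega : y ≤ -1)]⟩)
  · exact .inl ⟨hx, hy⟩

lemma fareyGap_le_fract (h : IsFareyPair α δ δ' q q') (hn : n < q + q') (hi : i ≤ n) {l : ℕ}
    (hl : l ≤ n) (hne : l ≠ i) :
    fareyGap δ δ' q q' n i ≤ Int.fract (((i - l : ℤ) : ℝ) * α) := by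
  obtain ⟨x, y, hd, hxy⟩ := h.exists_coords (i - l) ⌊((i - l : ℤ) : ℝ) * α⌋
  rw [Int.self_sub_floor] at hxy
  have hnonneg := Int.fract_nonneg (((i - l : ℤ) : ℝ) * α)
  rw [hxy] at hnonneg ⊢
  have hδ := h.left_pos
  have hδ' := h.right_pos
  unfold fareyGap
  rcases h.coords_cases (by omega) (abs_lt.2 ⟨by omega, by omega⟩) hnonneg with
    ⟨hx, hy⟩ | ⟨hx, rfl⟩ | ⟨rfl, hy⟩
  · have hx_real : (1 : ℝ) ≤ x := by exact_mod_cast hx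
    have hy_real : (1 : ℝ) ≤ y := by exact_mod_cast hy
    split_ifs <;> nlinarith
  · have hx_real : (1 : ℝ) ≤ x := by exact_mod_cast hx
    have hle : (q : ℤ) ≤ i - l := by nlinarith [q.cast_nonneg (α := ℤ)]
    rw [if_pos (by omega)]
    push_cast
    nlinarith
  · have hy_real : (1 : ℝ) ≤ y := by exact_mod_cast hy
    have hle : (q' : ℤ) ≤ l - i := by nlinarith [q'.cast_nonneg (α := ℤ)]
    rw [if_neg (by omega), if_pos (by omega)]
    push_cast
    nlinarith

lemma fareyGap_lt_one (h : IsFareyPair α δ δ' q q') (hq : q ≤ n) (hq' : q' ≤ n)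
    (hn : n < q + q') : fareyGap δ δ' q q' n i < 1 := by
  have hδ := h.left_pos
  have hδ' := h.right_pos
  have hone := h.add_eq_one
  have hq_one : (1 : ℝ) ≤ q := by exact_mod_cast (by omega : 1 ≤ q)
  have hq'_one : (1 : ℝ) ≤ q' := by exact_mod_cast (by omega : 1 ≤ q')
  unfold fareyGap
  split_ifs with hleft hright
  · nlinarith
  · nlinarith
  · have hq_two : (2 : ℝ) ≤ q := by exact_mod_cast (by omega : 2 ≤ q)
    nlinarith

lemma exists_fract_eq_fareyGap (h : IsFareyPair α δ δ' q q') (hq : q ≤ n) (hq' : q' ≤ n)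
    (hn : n < q + q') (hi : i ≤ n) :
    ∃ l ≤ n, Int.fract (((i - l : ℤ) : ℝ) * α) = fareyGap δ δ' q q' n i := by
  obtain ⟨p, hp⟩ := h.exists_left
  obtain ⟨p', hp'⟩ := h.exists_right
  suffices hl : ∃ l ≤ n, ∃ z : ℤ, ((i - l : ℤ) : ℝ) * α - fareyGap δ δ' q q' n i = z by
    obtain ⟨l, hl, hz⟩ := hl
    exact ⟨l, hl, Int.fract_eq_iff.2 ⟨h.fareyGap_pos.le, h.fareyGap_lt_one hq hq' hn, hz⟩⟩
  unfold fareyGap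
  split_ifs with hleft hright
  · refine ⟨i - q, by omega, p, ?_⟩
    push_cast [hleft]
    linear_combination hp
  · refine ⟨i + q', hright, -p', ?_⟩
    push_cast
    linear_combination hp'
  · refine ⟨i + q' - q, by omega, p - p', ?_⟩
    push_cast [(by omega : q ≤ i + q')]
    linear_combination hp + hp'

lemma isGap (h : IsFareyPair α δ δ' q q') (hq : q ≤ n) (hq' : q' ≤ n) (hn : n < q + q')
    (hi : i ≤ n) : IsGap α n i (fareyGap δ δ' q q' n i) where
  le := hi
  pos := h.fareyGap_pos
  isLeast := by
    simp only [fract_breakpoint_sub_breakpoint]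
    refine ⟨?_, ?_⟩
    · obtain ⟨l, hl, hfract⟩ := h.exists_fract_eq_fareyGap hq hq' hn hi
      refine ⟨l, ⟨hl, ?_⟩, hfract⟩
      rintro rfl
      simpa using hfract.trans_ne h.fareyGap_pos.ne'
    · rintro _ ⟨l, ⟨hl, hne⟩, rfl⟩
      exact h.fareyGap_le_fract hn hi hl hne

lemma volume_phaseSet (h : IsFareyPair α δ δ' q q') (hα : α ∈ Icc (0 : ℝ) 1) (hq : q ≤ n)
    (hq' : q' ≤ n) (hn : n < q + q') (hi : i ≤ n) :
    volume (phaseSet α (breakWord α n i)) = ENNReal.ofReal (fareyGap δ δ' q q' n i) :=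
  (h.isGap hq hq' hn hi).volume_phaseSet_breakWord hα

lemma injOn_breakWord (h : IsFareyPair α δ δ' q q') (hα : α ∈ Icc (0 : ℝ) 1) (hq : q ≤ n)
    (hq' : q' ≤ n) (hn : n < q + q') : InjOn (breakWord α n) (Iic n) := by
  intro l hl i hi heq
  by_contra hne
  exact (h.isGap hq hq' hn hi).breakWord_ne hα hl hne heq

lemma fareyGap_eq_add_iff (h : IsFareyPair α δ δ' q q') :
    fareyGap δ δ' q q' n i = δ + δ' ↔ i < q ∧ n < i + q' := by
  have hδ := h.left_pos
  have hδ' := h.right_pos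
  unfold fareyGap
  split_ifs with hleft hright <;> simp [hδ.ne', hδ'.ne'] <;> omega

lemma left_ne_right (h : IsFareyPair α δ δ' q q') (hirr : Irrational α) (hq : q ≠ 0) :
    δ ≠ δ' := by
  rintro rfl
  obtain ⟨p, hp⟩ := h.exists_left
  obtain ⟨p', hp'⟩ := h.exists_right
  refine (hirr.natCast_mul (m := q + q') (by omega)).ne_int (p + p') ?_
  push_cast
  linear_combination hp - hp'

lemma fareyGap_eq_left_iff (h : IsFareyPair α δ δ' q q') (hne : δ ≠ δ') :
    fareyGap δ δ' q q' n i = δ ↔ q ≤ i := by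
  unfold fareyGap
  split_ifs <;> simp [h.right_pos.ne', hne.symm, *]

lemma fareyGap_eq_right_iff (h : IsFareyPair α δ δ' q q') (hne : δ ≠ δ') (hn : n < q + q') :
    fareyGap δ δ' q q' n i = δ' ↔ i + q' ≤ n := by
  unfold fareyGap
  split_ifs <;> simp [h.left_pos.ne', *]
  omega

/-- The word at position `p + 1` is the one of index `q - (p + 1)`, and the positions available in
this prefix correspond to exactly the indices of long gaps. -/
lemma occursIn_breakWord_iff (h : IsFareyPair α δ δ' q q') (hα : α ∈ Icc (0 : ℝ) 1)
    (hq : q ≤ n) (hq' : q' ≤ n) (hn : n < q + q') (hi : i ≤ n) :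
    OccursIn α (breakWord α n i) (q + q' - 2) ↔ fareyGap δ δ' q q' n i = δ + δ' := by
  have hword {p l : ℕ} (hpl : p + 1 + l = q) (hl : n < l + q') :
      word α p n = breakWord α n l := by
    obtain ⟨z, hz⟩ := h.exists_left
    refine (h.isGap hq hq' hn (i := l) (by omega)).word_eq_breakWord hα (z := z) ?_
    rw [hpl, hz, h.fareyGap_eq_add_iff.2 ⟨by omega, hl⟩]
    exact ⟨h.left_pos.le, lt_add_of_pos_right _ h.right_pos⟩
  simp only [OccursIn, length_breakWord, h.fareyGap_eq_add_iff]
  refine ⟨fun ⟨p, hp, hw⟩ => ?_, fun hlong => ?_⟩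
  · obtain ⟨l, hpl⟩ : ∃ l, p + 1 + l = q := ⟨q - (p + 1), by omega⟩
    obtain rfl : i = l := h.injOn_breakWord hα hq hq' hn hi (by grind)
      (hw.trans (hword hpl (by omega)))
    omega
  · exact ⟨q - i - 1, by omega, (hword (by omega) hlong.2).symm⟩

lemma ncard_factors_eq (h : IsFareyPair α δ δ' q q') (hα : α ∈ Icc (0 : ℝ) 1)
    (hirr : Irrational α) (hq : q ≤ n) (hq' : q' ≤ n) (hn : n < q + q') {g : ℝ} (hg : 0 ≤ g) :
    {w | w.length = n ∧ IsFactor α w ∧ volume (phaseSet α w) = ENNReal.ofReal g}.ncard =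
      {i | i ≤ n ∧ fareyGap δ δ' q q' n i = g}.ncard := by
  have hvol {i : ℕ} (hi : i ≤ n) : volume (phaseSet α (breakWord α n i)) = ENNReal.ofReal g ↔
      fareyGap δ δ' q q' n i = g := by
    rw [h.volume_phaseSet hα hq hq' hn hi, ENNReal.ofReal_eq_ofReal_iff h.fareyGap_pos.le hg]
  have hinj : InjOn (breakWord α n) {i | i ≤ n ∧ fareyGap δ δ' q q' n i = g} :=
    (h.injOn_breakWord hα hq hq' hn).mono fun i hi => hi.1
  rw [← hinj.ncard_image]
  congr 1
  ext w
  constructor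
  · rintro ⟨rfl, hw, hv⟩
    obtain ⟨i, hi, heq⟩ := hw.exists_eq_breakWord hα
    exact ⟨i, ⟨hi, (hvol hi).1 (heq ▸ hv)⟩, heq.symm⟩
  · rintro ⟨i, ⟨hi, hgap⟩, rfl⟩
    exact ⟨length_breakWord α n i, (h.isGap hq hq' hn hi).isFactor_breakWord hα hirr,
      (hvol hi).2 hgap⟩

lemma ncard_setOf_fareyGap_eq_add (h : IsFareyPair α δ δ' q q') (hq : q ≤ n) (hq' : q' ≤ n) :
    {i | i ≤ n ∧ fareyGap δ δ' q q' n i = δ + δ'}.ncard = q + q' - n - 1 := by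
  have hset : {i | i ≤ n ∧ fareyGap δ δ' q q' n i = δ + δ'} = Finset.Ico (n + 1 - q') q := by
    ext i
    simp only [h.fareyGap_eq_add_iff, Set.mem_ofPred_eq, Finset.coe_Ico, Set.mem_Ico]
    omega
  rw [hset, Set.ncard_coe_finset, Nat.card_Ico]
  omega

lemma ncard_setOf_fareyGap_eq_left (h : IsFareyPair α δ δ' q q') (hne : δ ≠ δ') :
    {i | i ≤ n ∧ fareyGap δ δ' q q' n i = δ}.ncard = n + 1 - q := by
  have hset : {i | i ≤ n ∧ fareyGap δ δ' q q' n i = δ} = Finset.Icc q n := by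
    ext i
    simp only [h.fareyGap_eq_left_iff hne, Set.mem_ofPred_eq, Finset.coe_Icc, Set.mem_Icc]
    omega
  rw [hset, Set.ncard_coe_finset, Nat.card_Icc]

lemma ncard_setOf_fareyGap_eq_right (h : IsFareyPair α δ δ' q q') (hne : δ ≠ δ')
    (hn : n < q + q') :
    {i | i ≤ n ∧ fareyGap δ δ' q q' n i = δ'}.ncard = n + 1 - q' := by
  have hset : {i | i ≤ n ∧ fareyGap δ δ' q q' n i = δ'} = Finset.range (n + 1 - q') := by
    ext i
    simp only [h.fareyGap_eq_right_iff hne hn, Set.mem_ofPred_eq, Finset.coe_range, Set.mem_Iio]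
    omega
  rw [hset, Set.ncard_coe_finset, Finset.card_range]

end IsFareyPair

lemma fib_mul_inv_goldenRatio_sub_fib (m : ℕ) :
    fib (m + 1) * φ⁻¹ - fib m = (-1) ^ m * φ⁻¹ ^ (m + 1) := by
  have hsign : (-1 : ℝ) ^ m * (-1) ^ (m + 1) = -1 := by
    rw [← pow_add, Odd.neg_one_pow ⟨m, by ring⟩]
  have hconj := Real.goldenConj_mul_fib_succ_add_fib m
  rw [Real.inv_goldenRatio, neg_pow ψ]
  linear_combination -hconj - ψ ^ (m + 1) * hsign

lemma fib_mul_inv_goldenRatio_pow_add (m : ℕ) :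
    fib (m + 1) * φ⁻¹ ^ (m + 2) + fib (m + 2) * φ⁻¹ ^ (m + 1) = 1 :=
  calc fib (m + 1) * φ⁻¹ ^ (m + 2) + fib (m + 2) * φ⁻¹ ^ (m + 1)
      = φ⁻¹ ^ (m + 2) * (φ * fib (m + 2) + fib (m + 1)) := by
        rw [pow_succ φ⁻¹ (m + 1)]
        field_simp
        ring
    _ = φ⁻¹ ^ (m + 2) * φ ^ (m + 2) := by rw [Real.goldenRatio_mul_fib_succ_add_fib]
    _ = 1 := by rw [← mul_pow, inv_mul_cancel₀ Real.goldenRatio_ne_zero, one_pow]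

lemma inv_goldenRatio_pow_add_pow (m : ℕ) : φ⁻¹ ^ (m + 1) + φ⁻¹ ^ (m + 2) = φ⁻¹ ^ m := by
  rw [Real.inv_goldenRatio]
  linear_combination (-ψ) ^ m * Real.goldenConj_sq

lemma isFareyPair_fib_of_even {m : ℕ} (hm : Even m) :
    IsFareyPair φ⁻¹ (φ⁻¹ ^ (m + 1)) (φ⁻¹ ^ (m + 2)) (fib (m + 1)) (fib (m + 2)) where
  left_pos := by positivity
  right_pos := by positivity
  exists_left := ⟨fib m, by simpa [hm.neg_one_pow] using fib_mul_inv_goldenRatio_sub_fib m⟩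
  exists_right := ⟨fib (m + 1), by
    have h := fib_mul_inv_goldenRatio_sub_fib (m + 1)
    rw [hm.add_one.neg_one_pow] at h
    push_cast
    linear_combination -h⟩
  add_eq_one := fib_mul_inv_goldenRatio_pow_add m

lemma isFareyPair_fib_of_odd {m : ℕ} (hm : Odd m) :
    IsFareyPair φ⁻¹ (φ⁻¹ ^ (m + 2)) (φ⁻¹ ^ (m + 1)) (fib (m + 2)) (fib (m + 1)) where
  left_pos := by positivity
  right_pos := by positivity
  exists_left := ⟨fib (m + 1), by
    simpa [hm.add_one.neg_one_pow] using fib_mul_inv_goldenRatio_sub_fib (m + 1)⟩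
  exists_right := ⟨fib m, by
    have h := fib_mul_inv_goldenRatio_sub_fib m
    rw [hm.neg_one_pow] at h
    push_cast
    linear_combination -h⟩
  add_eq_one := by rw [add_comm, fib_mul_inv_goldenRatio_pow_add]

lemma isFareyPair_fib (m : ℕ) :
    IsFareyPair φ⁻¹ (φ⁻¹ ^ (m + 1)) (φ⁻¹ ^ (m + 2)) (fib (m + 1)) (fib (m + 2)) ∨
      IsFareyPair φ⁻¹ (φ⁻¹ ^ (m + 2)) (φ⁻¹ ^ (m + 1)) (fib (m + 2)) (fib (m + 1)) :=
  (Nat.even_or_odd m).imp isFareyPair_fib_of_even isFareyPair_fib_of_odd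

theorem phase_interval_measure_fib_general {α δ δ' : ℝ} {q q' n : ℕ} (hα : α ∈ Icc (0 : ℝ) 1)
    (hirr : Irrational α) (h : IsFareyPair α δ δ' q q' ∨ IsFareyPair α δ' δ q' q)
    (hq : q ≤ n) (hq' : q' ≤ n) (hn : n < q + q') :
    (∀ w : List Bool, w.length = n → IsFactor α w →
      volume (phaseSet α w) = ENNReal.ofReal (δ + δ') ∨
      volume (phaseSet α w) = ENNReal.ofReal δ ∨
      volume (phaseSet α w) = ENNReal.ofReal δ') ∧
    (∀ w : List Bool, w.length = n → IsFactor α w →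
      (volume (phaseSet α w) = ENNReal.ofReal (δ + δ') ↔ OccursIn α w (q + q' - 2))) ∧
    {w | w.length = n ∧ IsFactor α w ∧
      volume (phaseSet α w) = ENNReal.ofReal (δ + δ')}.ncard = q + q' - n - 1 ∧
    {w | w.length = n ∧ IsFactor α w ∧
      volume (phaseSet α w) = ENNReal.ofReal δ}.ncard = n + 1 - q ∧
    {w | w.length = n ∧ IsFactor α w ∧
      volume (phaseSet α w) = ENNReal.ofReal δ'}.ncard = n + 1 - q' := by
  wlog h' : IsFareyPair α δ δ' q q' generalizing δ δ' q q'
  · have hswap := this h.symm hq' hq (by omega) (h.resolve_left h')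
    rw [add_comm δ', add_comm q'] at hswap
    obtain ⟨hmem, hocc, hlong, hright, hleft⟩ := hswap
    exact ⟨fun w hw hf => (hmem w hw hf).imp_right Or.symm, hocc, hlong, hleft, hright⟩
  have hδ := h'.left_pos.le
  have hδ' := h'.right_pos.le
  have hne := h'.left_ne_right hirr (by omega)
  simp only [h'.ncard_factors_eq hα hirr hq hq' hn, hδ, hδ', add_nonneg]
  refine ⟨?_, ?_, h'.ncard_setOf_fareyGap_eq_add hq hq', h'.ncard_setOf_fareyGap_eq_left hne,
    h'.ncard_setOf_fareyGap_eq_right hne hn⟩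
  · rintro w rfl hw
    obtain ⟨i, hi, heq⟩ := hw.exists_eq_breakWord hα
    rw [heq, h'.volume_phaseSet hα hq hq' hn hi, fareyGap]
    split_ifs <;> simp
  · rintro w rfl hw
    obtain ⟨i, hi, heq⟩ := hw.exists_eq_breakWord hα
    rw [heq, h'.volume_phaseSet hα hq hq' hn hi, h'.occursIn_breakWord_iff hα hq hq' hn hi,
      ENNReal.ofReal_eq_ofReal_iff h'.fareyGap_pos.le (add_nonneg hδ hδ')]

/-- For `n = F_k + j` (`k ≥ 2`, `0 ≤ j ≤ F_{k-1} - 1`) and a factor `w` of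
`v₀` of length `n`, the Lebesgue measure of `I(w)` belongs to
`{τ^{-(k-1)}, τ^{-k}, τ^{-(k+1)}}`; it equals `τ^{-(k-1)}` exactly when `w` occurs in
`(v₀(1), …, v₀(F_{k+1} - 2))`, and the number of factors of measure
`τ^{-(k-1)}`, `τ^{-k}`, `τ^{-(k+1)}` is `F_{k-1} - j - 1`, `F_{k-2} + j + 1`, `j + 1`
respectively. -/
theorem phase_interval_measure_fib (α τ : ℝ) (hα : α = (Real.sqrt 5 - 1) / 2)
    (hτ : τ = (1 + Real.sqrt 5) / 2)
    (k j n : ℕ) (hk : 2 ≤ k) (hj : j ≤ F (k - 1) - 1) (hn : n = F k + j) :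
    (∀ w : List Bool, w.length = n → IsFactor α w →
        (MeasureTheory.volume (phaseSet α w) = ENNReal.ofReal ((1 / τ) ^ (k - 1)) ∨
         MeasureTheory.volume (phaseSet α w) = ENNReal.ofReal ((1 / τ) ^ k) ∨
         MeasureTheory.volume (phaseSet α w) = ENNReal.ofReal ((1 / τ) ^ (k + 1)))) ∧
    (∀ w : List Bool, w.length = n → IsFactor α w →
        (MeasureTheory.volume (phaseSet α w) = ENNReal.ofReal ((1 / τ) ^ (k - 1)) ↔
          OccursIn α w (F (k + 1) - 2))) ∧
    {w : List Bool | w.length = n ∧ IsFactor α w ∧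
        MeasureTheory.volume (phaseSet α w) = ENNReal.ofReal ((1 / τ) ^ (k - 1))}.ncard
      = F (k - 1) - j - 1 ∧
    {w : List Bool | w.length = n ∧ IsFactor α w ∧
        MeasureTheory.volume (phaseSet α w) = ENNReal.ofReal ((1 / τ) ^ k)}.ncard
      = F (k - 2) + j + 1 ∧
    {w : List Bool | w.length = n ∧ IsFactor α w ∧
        MeasureTheory.volume (phaseSet α w) = ENNReal.ofReal ((1 / τ) ^ (k + 1))}.ncard
      = j + 1 := by
  obtain rfl : τ = φ := hτ
  obtain rfl : α = φ⁻¹ := by rw [hα, Real.inv_goldenRatio]; ring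
  obtain ⟨m, rfl⟩ : ∃ m, k = m + 2 := ⟨k - 2, by omega⟩
  simp only [F, one_div, Nat.reduceSubDiff, Nat.add_assoc, Nat.reduceAdd] at hj hn ⊢
  have hfib₂ : 0 < fib (m + 2) := Nat.fib_pos.2 (by omega)
  have hfib₃ : fib (m + 3) = fib (m + 1) + fib (m + 2) := Nat.fib_add_two
  have hfib₄ : fib (m + 4) = fib (m + 2) + fib (m + 3) := Nat.fib_add_two
  have hpow : φ⁻¹ ^ (m + 2) + φ⁻¹ ^ (m + 3) = φ⁻¹ ^ (m + 1) := inv_goldenRatio_pow_add_pow (m + 1)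
  have hφ : φ⁻¹ ∈ Icc (0 : ℝ) 1 :=
    ⟨by positivity, inv_le_one_of_one_le₀ Real.one_lt_goldenRatio.le⟩
  have hgeneral := phase_interval_measure_fib_general (n := n) (δ := φ⁻¹ ^ (m + 2))
    (δ' := φ⁻¹ ^ (m + 3)) (q := fib (m + 2)) (q' := fib (m + 3)) hφ
    Real.goldenRatio_irrational.inv (isFareyPair_fib (m + 1)) (by omega) (by omega) (by omega)
  rw [hpow, ← hfib₄] at hgeneral
  obtain ⟨hmem, hocc, hlong, hleft, hright⟩ := hgeneral
  exact ⟨hmem, hocc, hlong.trans (by omega), hleft.trans (by omega), hright.trans (by omega)⟩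

end
end
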